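/- For every n ∈ {4, 5} and every integer m ≥ 7, it holds that R_B(C_n ⊗ C_m) < R_B(C_n) · R_B(C_m). -/

import Mathlib

/-!
Write `r = RB (Cmat m)` and `N = r - 1`. The product gets a cover by `4 * N + 3 = 4 * r - 1`
rectangles, while `RB (Cmat n) ≥ 4` for `n ∈ {4, 5}`.

*Lower bounds.* The sets of rectangles meeting the rows of `C_n` form an antichain, so Sperner's
theorem gives `n ≤ choose R ⌊R/2⌋` for `R = RB (Cmat n)` (`le_choose_RB`). This yields
`RB (Cmat 4), RB (Cmat 5) ≥ 4` and `r ≥ 5`, and also `m ≤ choose r ⌊r/2⌋`.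

*Upper bound.* Suppose `C_n` and `C_m` each have three families of rectangles, of sizes `b₁, b₂, b₃`
and `a₁, a₂, a₃`, such that every 1-entry is covered by at least two of the families. Then any
1-entry of `C_n` and any 1-entry of `C_m` share a family, so the products of same-numbered
rectangles cover `C_n ⊗ C_m` with `a₁ b₁ + a₂ b₂ + a₃ b₃` rectangles (`RB_bkron_le`).
For `C_5`, sizes `(2, 2, 3)` suffice (`exists_words_five`), and `C_4` is a submatrix.
For `C_m`, sizes `(N, N, 1)` suffice (`exists_words`): split the `h`-subsets of an `(N + 1)`-set,
`h = ⌈N/2⌉`, according to whether they contain a fixed element. This bit is the third family, and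
the trace on the other `N` elements is the first. The second family keeps the traces `A` of size
`h - 1` and replaces the traces `B` of size `h` by the complement of a subset `f B ⊆ B` of size
`N - h`, with `f` injective (`exists_injective_subset`). Within one kind
the first two families separate by equal sizes, and from a `B` to an `A` by a larger size. From an
`A` to a `B` the bit separates, and `A` cannot be inside both `B` and its replacement, since these share at most one element.
-/

/-- A collection of `s` Boolean matrices covers `A` if `A` has a 1 exactly where some
matrix of the collection has a 1. -/
def BCovers {α β : Type*} {s : ℕ} (M : Fin s → Matrix α β Bool) (A : Matrix α β Bool) : Prop :=
  ∀ i j, A i j = true ↔ ∃ t, M t i j = true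

/-- A nonzero Boolean matrix whose 1-entries form a combinatorial rectangle. -/
def IsRank1 {α β : Type*} (M : Matrix α β Bool) : Prop :=
  (∃ i j, M i j = true) ∧ ∃ u : α → Bool, ∃ v : β → Bool, ∀ i j, M i j = (u i && v j)

/-- The Boolean rank of a 0,1-matrix: the smallest `s` such that `A` is the entrywise
Boolean sum (OR) of `s` matrices of Boolean rank 1. -/
noncomputable def RB {α β : Type*} (A : Matrix α β Bool) : ℕ :=
  sInf {s | ∃ M : Fin s → Matrix α β Bool, (∀ t, IsRank1 (M t)) ∧ BCovers M A}

/-- The Kronecker product of Boolean matrices. -/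
def bkron {α β γ δ : Type*} (A : Matrix α β Bool) (B : Matrix γ δ Bool) :
    Matrix (α × γ) (β × δ) Bool :=
  fun i j => A i.1 j.1 && B i.2 j.2

/-- The n × n matrix with zeros on the diagonal and ones everywhere else. -/
def Cmat (n : ℕ) : Matrix (Fin n) (Fin n) Bool := fun i j => decide (i ≠ j)

/-- σ(n): the smallest k with n ≤ binom(k, ⌈k/2⌉). -/
noncomputable def sigmaFn (n : ℕ) : ℕ := sInf {k | n ≤ Nat.choose k ((k + 1) / 2)}

/-- (a₁,a₂,a₃)-coverability: three matrices of the given Boolean ranks, every two of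
which cover `A`. -/
def Coverable3 {α β : Type*} (A : Matrix α β Bool) (a1 a2 a3 : ℕ) : Prop :=
  ∃ A1 A2 A3 : Matrix α β Bool,
    RB A1 ≤ a1 ∧ RB A2 ≤ a2 ∧ RB A3 ≤ a3 ∧
    (∀ i j, A i j = true ↔ (A1 i j = true ∨ A2 i j = true)) ∧
    (∀ i j, A i j = true ↔ (A1 i j = true ∨ A3 i j = true)) ∧
    (∀ i j, A i j = true ↔ (A2 i j = true ∨ A3 i j = true))

/-- The number of 1-entries of a Boolean matrix. -/
def ones {α β : Type*} [Fintype α] [Fintype β] (A : Matrix α β Bool) : ℕ :=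
  (Finset.univ.filter (fun p : α × β => A p.1 p.2 = true)).card

/-- The largest number of 1-entries in a monochromatic rectangle of ones of `A`. -/
noncomputable def maxRect {α β : Type*} [Fintype α] [Fintype β] (A : Matrix α β Bool) : ℕ :=
  sSup {c | ∃ M : Matrix α β Bool,
    IsRank1 M ∧ (∀ i j, M i j = true → A i j = true) ∧ c = ones M}

/-- A family of `|ι|` possibly empty rectangles covering `A` yields a genuine cover by at most
`|ι|` matrices of Boolean rank 1, since the empty rectangles can be discarded. -/
lemma exists_cover {α β ι : Type*} [Fintype ι] (A : Matrix α β Bool)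
    (u : ι → α → Prop) (v : ι → β → Prop)
    (h : ∀ i j, A i j = true ↔ ∃ t, u t i ∧ v t j) :
    ∃ s ≤ Fintype.card ι, ∃ M : Fin s → Matrix α β Bool, (∀ t, IsRank1 (M t)) ∧ BCovers M A := by
  classical
  let κ := {t : ι // ∃ i j, u t i ∧ v t j}
  let e : κ ≃ Fin (Fintype.card κ) := Fintype.equivFin κ
  refine ⟨Fintype.card κ, Fintype.card_subtype_le _,
    fun t i j => decide (u (e.symm t).1 i) && decide (v (e.symm t).1 j), fun t => ⟨?_, ?_⟩, ?_⟩
  · obtain ⟨i, j, hij⟩ := (e.symm t).2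
    exact ⟨i, j, by simpa using hij⟩
  · exact ⟨fun i => decide (u (e.symm t).1 i), fun j => decide (v (e.symm t).1 j),
      fun i j => rfl⟩
  · intro i j
    rw [h]
    constructor
    · rintro ⟨t, ht⟩
      exact ⟨e ⟨t, i, j, ht⟩, by simpa using ht⟩
    · rintro ⟨t, ht⟩
      exact ⟨(e.symm t).1, by simpa using ht⟩

lemma RB_le_card {α β ι : Type*} [Fintype ι] (A : Matrix α β Bool)
    (u : ι → α → Prop) (v : ι → β → Prop)
    (h : ∀ i j, A i j = true ↔ ∃ t, u t i ∧ v t j) : RB A ≤ Fintype.card ι := by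
  obtain ⟨s, hs, M, hM⟩ := exists_cover A u v h
  exact (Nat.sInf_le (show s ∈ {s | ∃ M : Fin s → Matrix α β Bool,
    (∀ t, IsRank1 (M t)) ∧ BCovers M A} from ⟨M, hM⟩)).trans hs

lemma exists_cover_Cmat (n : ℕ) : ∃ M : Fin (RB (Cmat n)) → Matrix (Fin n) (Fin n) Bool,
    (∀ t, IsRank1 (M t)) ∧ BCovers M (Cmat n) := by
  obtain ⟨s, -, M, hM⟩ := exists_cover (Cmat n) (fun t i => t = i) (fun t j => t ≠ j)
    (by simp [Cmat])
  exact Nat.sInf_mem (s := {s | ∃ M : Fin s → Matrix (Fin n) (Fin n) Bool,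
    (∀ t, IsRank1 (M t)) ∧ BCovers M (Cmat n)}) ⟨s, M, hM⟩

/-- Recording which rectangles of an optimal cover of `C_n` meet each row gives an antichain of
`n` subsets of a set of size `RB (Cmat n)`, so Sperner's theorem applies. -/
lemma le_choose_RB (n : ℕ) : n ≤ (RB (Cmat n)).choose (RB (Cmat n) / 2) := by
  classical
  obtain ⟨M, hM, hc⟩ := exists_cover_Cmat n
  choose u v huv using fun t => (hM t).2
  let S : Fin n → Finset (Fin (RB (Cmat n))) := fun i => Finset.univ.filter fun t => u t i = true
  have hS : ∀ i j, i ≠ j → ¬ S i ⊆ S j := by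
    intro i j hij hsub
    obtain ⟨t, ht⟩ := (hc i j).1 (by simpa [Cmat] using hij)
    rw [huv, Bool.and_eq_true] at ht
    have hj : u t j = true := by
      have : t ∈ S j := hsub (by simpa [S] using ht.1)
      simpa [S] using this
    have := (hc j j).2 ⟨t, by rw [huv, hj, ht.2]; rfl⟩
    simp [Cmat] at this
  have hinj : Function.Injective S := by
    intro i j hij
    by_contra hne
    exact hS i j hne hij.subset
  have hanti : IsAntichain (· ⊆ ·) (↑(Finset.univ.image S) : Set (Finset (Fin (RB (Cmat n))))) := by
    intro a ha b hb hab
    simp only [Finset.coe_image, Finset.coe_univ, Set.image_univ, Set.mem_range] at ha hb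
    obtain ⟨i, rfl⟩ := ha
    obtain ⟨j, rfl⟩ := hb
    exact hS i j fun h => hab (h ▸ rfl)
  have := hanti.sperner
  rwa [Finset.card_image_of_injective _ hinj, Finset.card_univ, Fintype.card_fin,
    Fintype.card_fin] at this

lemma lt_RB_of_choose_lt {n k : ℕ} (h : k.choose (k / 2) < n) : k < RB (Cmat n) := by
  by_contra! hle
  have h1 := le_choose_RB n
  have h2 : (RB (Cmat n)).choose (RB (Cmat n) / 2) ≤ k.choose (k / 2) :=
    (Nat.choose_le_choose _ hle).trans (Nat.choose_le_middle _ _)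
  omega

/-- Injective choice of a subset of size `N - h` inside each `h`-subset of an `N`-set, where
`h = ⌈N/2⌉`. For even `N` this is the identity; for odd `N` Hall's condition is the local LYM
inequality. -/
lemma exists_injective_subset (N : ℕ) : ∃ f : {B : Finset (Fin N) // B.card = (N + 1) / 2} →
    Finset (Fin N), Function.Injective f ∧
      ∀ B, f B ⊆ B.1 ∧ (f B).card = N - (N + 1) / 2 := by
  classical
  obtain ⟨k, rfl | rfl⟩ := Nat.even_or_odd' N
  · refine ⟨Subtype.val, Subtype.val_injective, fun B => ⟨subset_rfl, ?_⟩⟩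
    have := B.2
    omega
  · have hk : (2 * k + 1 + 1) / 2 = k + 1 := by omega
    rw [hk]
    obtain ⟨f, hf, hfm⟩ := (Finset.all_card_le_biUnion_card_iff_exists_injective
      (fun B : {B : Finset (Fin (2 * k + 1)) // B.card = k + 1} => B.1.powersetCard k)).1 (by
        intro s
        have hsized : ((s.image Subtype.val : Finset (Finset (Fin (2 * k + 1)))) :
            Set (Finset (Fin (2 * k + 1)))).Sized (k + 1) := by
          intro B hB
          simp only [Finset.coe_image, Set.mem_image] at hB
          obtain ⟨B', -, rfl⟩ := hB
          exact B'.2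
        have hL := Finset.local_lubell_yamamoto_meshalkin_inequality_mul hsized
        have hle : (Finset.shadow (s.image Subtype.val)) ⊆
            s.biUnion fun B => B.1.powersetCard k := by
          intro C hC
          obtain ⟨B, hB, a, ha, rfl⟩ := Finset.mem_shadow_iff.1 hC
          obtain ⟨B', hB', rfl⟩ := Finset.mem_image.1 hB
          refine Finset.mem_biUnion.2 ⟨B', hB', Finset.mem_powersetCard.2
            ⟨Finset.erase_subset _ _, ?_⟩⟩
          rw [Finset.card_erase_of_mem ha, B'.2]
          rfl
        have hcard := Finset.card_le_card hle
        rw [Finset.card_image_of_injective _ Subtype.val_injective, Fintype.card_fin] at hL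
        have : 2 * k + 1 - (k + 1) + 1 = k + 1 := by omega
        rw [this] at hL
        exact (Nat.le_of_mul_le_mul_right hL (Nat.succ_pos k)).trans hcard)
    refine ⟨f, hf, fun B => ?_⟩
    have := Finset.mem_powersetCard.1 (hfm B)
    exact ⟨this.1, by rw [this.2]; omega⟩

/-- At least two of three propositions hold. -/
def TwoOfThree (P Q R : Prop) : Prop := (P ∧ Q) ∨ (P ∧ R) ∨ (Q ∧ R)

instance (P Q R : Prop) [Decidable P] [Decidable Q] [Decidable R] :
    Decidable (TwoOfThree P Q R) := by unfold TwoOfThree; infer_instance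

/-- Three rectangle families of sizes `N`, `N`, `1` for `C_m`, any two of which jointly cover
it, encoded by the sets `x k`, `y k` and the bit `z k` of the rectangles whose row set contains `k`;
the column set of each rectangle is the complement of its row set. -/
lemma exists_words {N m : ℕ} (hN : 4 ≤ N) (hm : m ≤ (N + 1).choose ((N + 1) / 2)) :
    ∃ (x y : Fin m → Finset (Fin N)) (z : Fin m → Bool), ∀ k l, k ≠ l →
      TwoOfThree (¬ x k ⊆ x l) (¬ y k ⊆ y l) (z k = true ∧ z l = false) := by
  classical
  have hex := exists_injective_subset N
  obtain ⟨h, hh⟩ : ∃ h, (N + 1) / 2 = h + 1 := ⟨(N + 1) / 2 - 1, by omega⟩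
  rw [hh] at hex hm
  obtain ⟨f, hf, hfB⟩ := hex
  let W := {A : Finset (Fin N) // A.card = h} ⊕ {B : Finset (Fin N) // B.card = h + 1}
  have hW : Fintype.card W = (N + 1).choose (h + 1) := by
    simp [W, Nat.choose_succ_succ]
  obtain ⟨g⟩ : Nonempty (Fin m ↪ W) :=
    Function.Embedding.nonempty_of_card_le (by rw [hW, Fintype.card_fin]; exact hm)
  -- two distinct finite sets of the same size are incomparable
  have hinc : ∀ {A B : Finset (Fin N)}, B.card ≤ A.card → A ≠ B → ¬ A ⊆ B :=
    fun hc hne hs => hne (Finset.eq_of_subset_of_card_le hs hc)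
  have hfc : ∀ B, ((f B)ᶜ).card = h + 1 := by
    intro B
    rw [Finset.card_compl, (hfB B).2, Fintype.card_fin]
    omega
  let x : W → Finset (Fin N) := Sum.elim Subtype.val Subtype.val
  let y : W → Finset (Fin N) := Sum.elim Subtype.val fun B => (f B)ᶜ
  let z : W → Bool := Sum.elim (fun _ => true) fun _ => false
  suffices H : ∀ a b : W, a ≠ b →
      TwoOfThree (¬ x a ⊆ x b) (¬ y a ⊆ y b) (z a = true ∧ z b = false) from
    ⟨fun k => x (g k), fun k => y (g k), fun k => z (g k),
      fun k l hkl => H _ _ fun hg => hkl (g.injective hg)⟩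
  rintro (A | B) (A' | B') hne
  · have : A.1 ≠ A'.1 := fun h => hne (by rw [Subtype.ext h])
    have := hinc (by rw [A.2, A'.2]) this
    exact Or.inl ⟨this, this⟩
  ·
    -- a set in both `B'` and `(f B')ᶜ` has at most one element, fewer than `A`
    by_cases hs : A.1 ⊆ B'.1
    · refine Or.inr (Or.inr ⟨fun hs' => ?_, rfl, rfl⟩)
      have hsub : A.1 ⊆ B'.1 \ f B' := fun a ha =>
        Finset.mem_sdiff.2 ⟨hs ha, Finset.mem_compl.1 (hs' ha)⟩
      have hc := Finset.card_le_card hsub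
      rw [Finset.card_sdiff_of_subset (hfB B').1, (hfB B').2, A.2, B'.2] at hc
      omega
    · exact Or.inr (Or.inl ⟨hs, rfl, rfl⟩)
  · refine Or.inl ⟨fun hs => ?_, fun hs => ?_⟩
    · have := Finset.card_le_card (show B.1 ⊆ A'.1 from hs)
      rw [B.2, A'.2] at this
      omega
    · have := Finset.card_le_card (show (f B)ᶜ ⊆ A'.1 from hs)
      rw [hfc, A'.2] at this
      omega
  · have h1 : B.1 ≠ B'.1 := fun h => hne (by rw [Subtype.ext h])
    have h2 : (f B)ᶜ ≠ (f B')ᶜ := fun h => h1 (by rw [hf (compl_injective h)])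
    exact Or.inl ⟨hinc (B'.2.trans B.2.symm).le h1, hinc ((hfc B').trans (hfc B).symm).le h2⟩

/-- Three rectangle families of sizes `2`, `2`, `3` for `C_5`, any two of which jointly cover
it, encoded as in `exists_words`; in the third family row `i` lies in exactly the rectangle `r i`,
so its code is the singleton of `r i`. -/
lemma exists_words_five : ∃ (p q : Fin 5 → Finset (Fin 2)) (r : Fin 5 → Fin 3), ∀ i j, i ≠ j →
    TwoOfThree (¬ p i ⊆ p j) (¬ q i ⊆ q j) (r i ≠ r j) :=
  ⟨![{0}, {1}, {0}, {1}, ∅], ![{0}, {1}, {1}, {0}, {0, 1}], ![0, 0, 1, 1, 2], by decide⟩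

/-- Pairing off the three families of `C_n` with those of `C_m`: each entry of `C_n` and each
entry of `C_m` misses at most one family, so they have a family in common. -/
lemma RB_bkron_le {n m N : ℕ} (hn : n ≤ 5) (hN : 4 ≤ N)
    (hm : m ≤ (N + 1).choose ((N + 1) / 2)) :
    RB (bkron (Cmat n) (Cmat m)) ≤ 4 * N + 3 := by
  obtain ⟨x, y, z, hxyz⟩ := exists_words hN hm
  obtain ⟨p, q, r, hpqr⟩ := exists_words_five
  let c : Fin n → Fin 5 := Fin.castLE hn
  have hc : ∀ {i j}, c i = c j → i = j := fun h => Fin.castLE_injective hn h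
  have hcard : Fintype.card ((Fin 2 × Fin N) ⊕ (Fin 2 × Fin N) ⊕ Fin 3) = 4 * N + 3 := by
    simp only [Fintype.card_sum, Fintype.card_prod, Fintype.card_fin]
    ring
  rw [← hcard]
  refine RB_le_card _
    (fun t a => Sum.elim (fun t => t.1 ∈ p (c a.1) ∧ t.2 ∈ x a.2)
      (Sum.elim (fun t => t.1 ∈ q (c a.1) ∧ t.2 ∈ y a.2)
        (fun t => r (c a.1) = t ∧ z a.2 = true)) t)
    (fun t b => Sum.elim (fun t => t.1 ∉ p (c b.1) ∧ t.2 ∉ x b.2)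
      (Sum.elim (fun t => t.1 ∉ q (c b.1) ∧ t.2 ∉ y b.2)
        (fun t => r (c b.1) ≠ t ∧ z b.2 = false)) t) ?_
  rintro ⟨i, k⟩ ⟨j, l⟩
  have hA : bkron (Cmat n) (Cmat m) (i, k) (j, l) = true ↔ i ≠ j ∧ k ≠ l := by
    simp [bkron, Cmat]
  rw [hA]
  constructor
  · rintro ⟨hij, hkl⟩
    have h1 := hpqr (c i) (c j) fun h => hij (hc h)
    have h2 := hxyz k l hkl
    have hcommon : (¬ p (c i) ⊆ p (c j) ∧ ¬ x k ⊆ x l) ∨ (¬ q (c i) ⊆ q (c j) ∧ ¬ y k ⊆ y l) ∨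
        (r (c i) ≠ r (c j) ∧ (z k = true ∧ z l = false)) := by
      unfold TwoOfThree at h1 h2
      tauto
    rcases hcommon with ⟨hp, hx⟩ | ⟨hq, hy⟩ | ⟨hr, hz⟩
    · obtain ⟨a, ha, ha'⟩ := Finset.not_subset.1 hp
      obtain ⟨b, hb, hb'⟩ := Finset.not_subset.1 hx
      exact ⟨Sum.inl (a, b), ⟨ha, hb⟩, ha', hb'⟩
    · obtain ⟨a, ha, ha'⟩ := Finset.not_subset.1 hq
      obtain ⟨b, hb, hb'⟩ := Finset.not_subset.1 hy
      exact ⟨Sum.inr (Sum.inl (a, b)), ⟨ha, hb⟩, ha', hb'⟩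
    · exact ⟨Sum.inr (Sum.inr (r (c i))), ⟨rfl, hz.1⟩, hr.symm, hz.2⟩
  · rintro ⟨t | t | t, ⟨h1, h2⟩, h3, h4⟩
    · exact ⟨by rintro rfl; exact h3 h1, by rintro rfl; exact h4 h2⟩
    · exact ⟨by rintro rfl; exact h3 h1, by rintro rfl; exact h4 h2⟩
    · exact ⟨by rintro rfl; exact h3 h1, by rintro rfl; simp_all⟩

theorem rank_kronecker_C45_Cm_strict (n m : ℕ) (hn : n = 4 ∨ n = 5) (hm : 7 ≤ m) :
    RB (bkron (Cmat n) (Cmat m)) < RB (Cmat n) * RB (Cmat m) := by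
  have h4 : 3 < RB (Cmat n) :=
    lt_RB_of_choose_lt (by have : Nat.choose 3 (3 / 2) = 3 := rfl; omega)
  have h5 : 4 < RB (Cmat m) :=
    lt_RB_of_choose_lt (by have : Nat.choose 4 (4 / 2) = 6 := rfl; omega)
  have hS := le_choose_RB m
  obtain ⟨N, hN⟩ : ∃ N, RB (Cmat m) = N + 1 := ⟨RB (Cmat m) - 1, by omega⟩
  rw [hN] at hS h5 ⊢
  have hle := RB_bkron_le (n := n) (by omega) (by omega : 4 ≤ N) hS
  have : 4 * (N + 1) ≤ RB (Cmat n) * (N + 1) := Nat.mul_le_mul_right _ h4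
  omega
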